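/- arXiv:1810.03224 — 4 statements merged into one kernel-verified Lean document; each statement's English description precedes it below -/
import Mathlib

section
/- Let f ∈ E be an edge with b_fᵀ L_G⁺ b_f < r_f (equivalently, G with f deleted is still connected), and let L' := L_G − (1/r_f)·b_f b_fᵀ be the Laplacian of G with f deleted, with Moore–Penrose pseudoinverse (L')⁺. Then for all d₁, d₂ ∈ ℝ^V with d₁ᵀ1 = d₂ᵀ1 = 0: d₁ᵀ (L')⁺ d₂ = d₁ᵀ L_G⁺ d₂ + (d₁ᵀ L_G⁺ b_f)(b_fᵀ L_G⁺ d₂)/(r_f − b_fᵀ L_G⁺ b_f). -/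
open Matrix BigOperators

/-- `B` is the Moore–Penrose pseudoinverse of `A`. -/
def IsMoorePenrose {ι : Type*} [Fintype ι] [DecidableEq ι] (A B : Matrix ι ι ℝ) : Prop :=
  A * B * A = A ∧ B * A * B = B ∧ (A * B)ᵀ = A * B ∧ (B * A)ᵀ = B * A

/-!
The Laplacian is `L = Bᵀ W B` with `W` a nonnegative diagonal matrix, hence `L = Mᵀ M` for
`M = √W B`, and the range of `Mᵀ M` is the range of `Mᵀ`. So the row `b` of `B` at an edge of
positive weight lies in the range of `L`, whether or not the graph is connected. For a vector in the
range, the Sherman–Morrison formula persists with the inverse replaced by the pseudoinverse: when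
`r ≠ bᵀ L⁺ b`, the matrix `N = L⁺ + (L⁺ b)(bᵀ L⁺) / (r - bᵀ L⁺ b)` satisfies `L' N = L L⁺` and
`N L' = L⁺ L`, and the Penrose equations for the pair `(L', N)` reduce to those for `(L, L⁺)`.
Uniqueness of the pseudoinverse then gives `L'⁺ = N`.
-/

section RankOneUpdate

variable {m n 𝕜 : Type*} [Fintype m] [Fintype n] [Field 𝕜]

lemma sub_vecMulVec_mul_add_vecMulVec {A : Matrix m n 𝕜} {P : Matrix n m 𝕜} {b : m → 𝕜}
    (c : n → 𝕜) {r : 𝕜} (hb : A *ᵥ (P *ᵥ b) = b) (hr : r ≠ 0) (hrb : c ⬝ᵥ P *ᵥ b ≠ r) :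
    (A - (1 / r) • vecMulVec b c) *
      (P + (1 / (r - c ⬝ᵥ P *ᵥ b)) • vecMulVec (P *ᵥ b) (c ᵥ* P)) = A * P := by
  set t := c ⬝ᵥ P *ᵥ b
  have hrt : r - t ≠ 0 := sub_ne_zero.2 hrb.symm
  have coeff : 1 / (r - t) - 1 / r - 1 / r * (1 / (r - t) * t) = 0 := by
    field_simp
    ring
  calc
    _ = A * P + (1 / (r - t) - 1 / r - 1 / r * (1 / (r - t) * t)) •
          vecMulVec b (c ᵥ* P) := by
      rw [Matrix.sub_mul, Matrix.mul_add, Matrix.mul_add, Matrix.mul_smul, mul_vecMulVec, hb,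
        Matrix.smul_mul, vecMulVec_mul, Matrix.mul_smul, Matrix.smul_mul, vecMulVec_mul_vecMulVec,
        vecMulVec_smul]
      module
    _ = A * P := by rw [coeff, zero_smul, add_zero]

lemma add_vecMulVec_mul_sub_vecMulVec {A : Matrix m n 𝕜} {P : Matrix n m 𝕜} (b : m → 𝕜)
    {c : n → 𝕜} {r : 𝕜} (hc : c ᵥ* P ᵥ* A = c) (hr : r ≠ 0) (hrb : c ⬝ᵥ P *ᵥ b ≠ r) :
    (P + (1 / (r - c ⬝ᵥ P *ᵥ b)) • vecMulVec (P *ᵥ b) (c ᵥ* P)) *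
      (A - (1 / r) • vecMulVec b c) = P * A := by
  have dot_transpose : b ⬝ᵥ Pᵀ *ᵥ c = c ⬝ᵥ P *ᵥ b := by
    rw [mulVec_transpose, dotProduct_comm, dotProduct_mulVec]
  have hc' : Aᵀ *ᵥ (Pᵀ *ᵥ c) = c := by rwa [mulVec_transpose, mulVec_transpose]
  have := sub_vecMulVec_mul_add_vecMulVec b hc' hr (dot_transpose ▸ hrb)
  rw [dot_transpose, mulVec_transpose, vecMul_transpose] at this
  apply transpose_injective
  simpa only [transpose_mul, transpose_add, transpose_sub, transpose_smul, transpose_vecMulVec]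
    using this

end RankOneUpdate

namespace IsMoorePenrose

variable {ι : Type*} [Fintype ι] [DecidableEq ι] {A P Q : Matrix ι ι ℝ}

lemma self_mul_eq (hP : IsMoorePenrose A P) (hQ : IsMoorePenrose A Q) : A * P = A * Q := by
  obtain ⟨hAPA, -, hAP, -⟩ := hP
  obtain ⟨hAQA, -, hAQ, -⟩ := hQ
  calc
    A * P = (A * Q * (A * P))ᵀ := by rw [← Matrix.mul_assoc, hAQA, hAP]
    _ = A * P * (A * Q) := by rw [transpose_mul, hAP, hAQ]
    _ = A * Q := by rw [← Matrix.mul_assoc, hAPA]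

lemma transpose (h : IsMoorePenrose A P) : IsMoorePenrose Aᵀ Pᵀ := by
  obtain ⟨hAPA, hPAP, hAP, hPA⟩ := h
  refine ⟨?_, ?_, ?_, ?_⟩
  · rw [Matrix.mul_assoc, ← transpose_mul, ← transpose_mul, hAPA]
  · rw [Matrix.mul_assoc, ← transpose_mul, ← transpose_mul, hPAP]
  · rw [← transpose_mul, hPA, hPA]
  · rw [← transpose_mul, hAP, hAP]

lemma mul_self_eq (hP : IsMoorePenrose A P) (hQ : IsMoorePenrose A Q) : P * A = Q * A :=
  transpose_injective <| by
    simpa only [transpose_mul] using hP.transpose.self_mul_eq hQ.transpose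

lemma unique (hP : IsMoorePenrose A P) (hQ : IsMoorePenrose A Q) : P = Q :=
  calc
    P = P * A * P := hP.2.1.symm
    _ = Q * A * Q := by
      rw [hP.mul_self_eq hQ, Matrix.mul_assoc, hP.self_mul_eq hQ, ← Matrix.mul_assoc]
    _ = Q := hQ.2.1

lemma sub_vecMulVec (h : IsMoorePenrose A P) {b c : ι → ℝ} {r : ℝ} (hb : ∃ y, A *ᵥ y = b)
    (hc : ∃ z, z ᵥ* A = c) (hr : r ≠ 0) (hrb : c ⬝ᵥ P *ᵥ b ≠ r) :
    IsMoorePenrose (A - (1 / r) • vecMulVec b c)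
      (P + (1 / (r - c ⬝ᵥ P *ᵥ b)) • vecMulVec (P *ᵥ b) (c ᵥ* P)) := by
  obtain ⟨hAPA, hPAP, hAP, hPA⟩ := h
  have hAPb : A *ᵥ (P *ᵥ b) = b := by
    obtain ⟨y, rfl⟩ := hb
    rw [mulVec_mulVec, mulVec_mulVec, hAPA]
  have hcPA : c ᵥ* P ᵥ* A = c := by
    obtain ⟨z, rfl⟩ := hc
    rw [vecMul_vecMul, vecMul_vecMul, ← Matrix.mul_assoc, hAPA]
  have left := sub_vecMulVec_mul_add_vecMulVec c hAPb hr hrb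
  have right := add_vecMulVec_mul_sub_vecMulVec b hcPA hr hrb
  refine ⟨?_, ?_, ?_, ?_⟩
  · rw [left, Matrix.mul_sub, hAPA, Matrix.mul_smul, mul_vecMulVec, ← mulVec_mulVec, hAPb]
  · rw [right, Matrix.mul_add, hPAP, Matrix.mul_smul, mul_vecMulVec, ← mulVec_mulVec, hAPb]
  · rw [left, hAP]
  · rw [right, hPA]

end IsMoorePenrose

lemma range_mulVecLin_transpose_mul_self {m n R : Type*} [Fintype m] [Fintype n] [Field R]
    [LinearOrder R] [IsStrictOrderedRing R] (M : Matrix m n R) :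
    (Mᵀ * M).mulVecLin.range = Mᵀ.mulVecLin.range := by
  refine Submodule.eq_of_le_of_finrank_eq ?_ ?_
  · rw [mulVecLin_mul]
    exact LinearMap.range_comp_le_range _ _
  · exact (rank_transpose_mul_self M).trans (rank_transpose M).symm

section WeightedLaplacian

variable {V E : Type*} [Fintype V] [Fintype E] [DecidableEq E]

lemma exists_transpose_mul_diagonal_mul_mulVec_eq_row {w : E → ℝ} (hw : ∀ e, 0 ≤ w e)
    (B : Matrix E V ℝ) {f : E} (hf : w f ≠ 0) :
    ∃ y, (Bᵀ * diagonal w * B) *ᵥ y = B f := by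
  set M := diagonal (fun e => √(w e)) * B with hM
  have gram : Bᵀ * diagonal w * B = Mᵀ * M := by
    rw [hM, transpose_mul, diagonal_transpose, Matrix.mul_assoc, Matrix.mul_assoc,
      ← Matrix.mul_assoc (diagonal _) (diagonal _), diagonal_mul_diagonal]
    simp only [Real.mul_self_sqrt (hw _)]
  have row_mem : B f ∈ Mᵀ.mulVecLin.range := by
    refine ⟨Pi.single f (√(w f))⁻¹, ?_⟩
    have hsqrt : √(w f) ≠ 0 := Real.sqrt_ne_zero'.2 ((hw f).lt_of_ne' hf)
    ext v
    simp only [hM, transpose_mul, diagonal_transpose, mulVecLin_apply, mulVec_single,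
      Matrix.col_apply, mul_diagonal, transpose_apply, Pi.smul_apply,
      MulOpposite.smul_eq_mul_unop, MulOpposite.unop_op]
    field_simp
  rw [← range_mulVecLin_transpose_mul_self, ← gram] at row_mem
  exact row_mem

theorem stmt_7_general [DecidableEq V] (w : E → ℝ) (hw : ∀ e, 0 ≤ w e) (B : Matrix E V ℝ)
    (L : Matrix V V ℝ) (hL : L = Bᵀ * diagonal w * B)
    (Lplus : Matrix V V ℝ) (hLplus : IsMoorePenrose L Lplus)
    (f : E) (hf : w f ≠ 0) (rf : ℝ) (hrf : rf = 1 / w f) (hlev : B f ⬝ᵥ Lplus *ᵥ B f ≠ rf)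
    (L' : Matrix V V ℝ) (hL' : L' = L - (1 / rf) • vecMulVec (B f) (B f))
    (L'plus : Matrix V V ℝ) (hL'plus : IsMoorePenrose L' L'plus) (d₁ d₂ : V → ℝ) :
    d₁ ⬝ᵥ L'plus *ᵥ d₂ =
      d₁ ⬝ᵥ Lplus *ᵥ d₂ +
        (d₁ ⬝ᵥ Lplus *ᵥ B f) * (B f ⬝ᵥ Lplus *ᵥ d₂) / (rf - B f ⬝ᵥ Lplus *ᵥ B f) := by
  have hrf0 : rf ≠ 0 := hrf ▸ one_div_ne_zero hf
  have hsymm : Lᵀ = L := by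
    rw [hL, transpose_mul, transpose_mul, transpose_transpose, diagonal_transpose,
      Matrix.mul_assoc]
  obtain ⟨y, hy⟩ : ∃ y, L *ᵥ y = B f :=
    hL ▸ exists_transpose_mul_diagonal_mul_mulVec_eq_row hw B hf
  have hy' : y ᵥ* L = B f := by rw [← mulVec_transpose, hsymm, hy]
  rw [hL'plus.unique (hL' ▸ hLplus.sub_vecMulVec ⟨y, hy⟩ ⟨y, hy'⟩ hrf0 hlev), add_mulVec,
    smul_mulVec, vecMulVec_mulVec, ← dotProduct_mulVec, dotProduct_add, dotProduct_smul,
    op_smul_eq_smul, dotProduct_smul, smul_eq_mul, smul_eq_mul]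
  ring

end WeightedLaplacian

theorem stmt_7
    {V : Type*} {E : Type*} [Fintype V] [DecidableEq V] [Fintype E] [DecidableEq E]
    [Nonempty E]
    (w : E → ℝ) (hw : ∀ e, 0 < w e)
    (B : Matrix E V ℝ)
    (hB : ∀ e : E, ∃ u v : V, u ≠ v ∧
      B e = fun x => (if x = u then (1 : ℝ) else 0) - (if x = v then 1 else 0))
    (L : Matrix V V ℝ) (hL : L = Bᵀ * Matrix.diagonal w * B)
    (hconn : ∀ x : V → ℝ, L.mulVec x = 0 ↔ ∃ c : ℝ, x = fun _ => c)
    (Lplus : Matrix V V ℝ) (hLplus : IsMoorePenrose L Lplus)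
    (f : E) (rf : ℝ) (hrf : rf = 1 / w f)
    (hlev : B f ⬝ᵥ Lplus.mulVec (B f) < rf)
    (L' : Matrix V V ℝ) (hL' : L' = L - (1 / rf) • Matrix.vecMulVec (B f) (B f))
    (L'plus : Matrix V V ℝ) (hL'plus : IsMoorePenrose L' L'plus) :
    ∀ d₁ d₂ : V → ℝ, (∑ a, d₁ a) = 0 → (∑ a, d₂ a) = 0 →
      d₁ ⬝ᵥ L'plus.mulVec d₂ =
        d₁ ⬝ᵥ Lplus.mulVec d₂ +
          (d₁ ⬝ᵥ Lplus.mulVec (B f)) * (B f ⬝ᵥ Lplus.mulVec d₂) /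
            (rf - B f ⬝ᵥ Lplus.mulVec (B f)) := by
  exact fun d₁ d₂ _ _ => stmt_7_general w (fun e => (hw e).le) B L hL Lplus hLplus f (hw f).ne' rf
    hrf hlev.ne L' hL' L'plus hL'plus d₁ d₂
end

section
/- Let f = {u,v} ∈ E with u ≠ v, let V' be the vertex set obtained from V by identifying u and v to a single vertex, and let P ∈ ℝ^{V'×V} be the 0–1 matrix with P_{z,y} = 1 if and only if z is the image of y under this identification. Let L_{G/f} := P L_G Pᵀ (the Laplacian of G with f contracted), with Moore–Penrose pseudoinverse (L_{G/f})⁺. Then for all d₁, d₂ ∈ ℝ^V with d₁ᵀ1 = d₂ᵀ1 = 0: (P d₁)ᵀ (L_{G/f})⁺ (P d₂) = d₁ᵀ L_G⁺ d₂ − (d₁ᵀ L_G⁺ b_f)(b_fᵀ L_G⁺ d₂)/(b_fᵀ L_G⁺ b_f). -/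
open Matrix BigOperators

/-!
Write `b = b_f`. The image of `Pᵀ` is the hyperplane of potentials orthogonal to `b`. For `d` in the
range of `L`, the potential `L⁺ d - α L⁺ b` with `α = (bᵀ L⁺ d) / (bᵀ L⁺ b)` lies in that
hyperplane, so it is `Pᵀ y` for some `y`. As `P b = 0`, this `y` solves the contracted system
`(P L Pᵀ) y = P (d - α b) = P d`. Pairing `P d₁` with the solution for `d₂` gives
`(P d₁)ᵀ y = d₁ᵀ Pᵀ y = d₁ᵀ L⁺ d₂ - α d₁ᵀ L⁺ b`.
-/

theorem mulVec_mulVec_of_mem_range {m n R : Type*} [Fintype m] [Fintype n] [NonUnitalSemiring R]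
    {A : Matrix m n R} {G : Matrix n m R} (hG : A * G * A = A) {d : m → R}
    (hd : d ∈ Set.range A.mulVec) : A *ᵥ (G *ᵥ d) = d := by
  obtain ⟨x, rfl⟩ := hd
  rw [mulVec_mulVec, mulVec_mulVec, hG]

theorem mulVec_dotProduct_mulVec_mulVec {ι R : Type*} [Fintype ι] [NonUnitalCommSemiring R]
    {A G : Matrix ι ι R} (hA : A.IsSymm) (hG : A * G * A = A) (x y : ι → R) :
    A *ᵥ x ⬝ᵥ G *ᵥ (A *ᵥ y) = A *ᵥ x ⬝ᵥ y := by
  have adjoint (z : ι → R) : A *ᵥ x ⬝ᵥ z = x ⬝ᵥ A *ᵥ z := by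
    rw [dotProduct_mulVec, ← mulVec_transpose, hA]
  rw [adjoint, adjoint, mulVec_mulVec_of_mem_range hG ⟨y, rfl⟩]

theorem dotProduct_mulVec_ne_zero_of_mem_range {ι : Type*} [Fintype ι] {A G : Matrix ι ι ℝ}
    (hA : A.PosSemidef) (hG : A * G * A = A) {b : ι → ℝ} (hb : b ∈ Set.range A.mulVec)
    (hb0 : b ≠ 0) : b ⬝ᵥ G *ᵥ b ≠ 0 := by
  have hAsymm : A.IsSymm := hA.isHermitian
  obtain ⟨z, rfl⟩ := hb
  rw [mulVec_dotProduct_mulVec_mulVec hAsymm hG, dotProduct_comm]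
  exact mt (hA.dotProduct_mulVec_zero_iff z).1 hb0

section Range

variable {K : Type*} [Field K]

theorem mem_range_mulVec_of_forall_dotProduct_eq_zero {m n : Type*} [Fintype m] [Fintype n]
    {A : Matrix m n K} {d : m → K} (hd : ∀ x, Aᵀ *ᵥ x = 0 → x ⬝ᵥ d = 0) :
    d ∈ Set.range A.mulVec := by
  classical
  by_contra hmem
  obtain ⟨g, hgd, hg⟩ := Submodule.exists_le_ker_of_notMem (p := LinearMap.range A.mulVecLin) hmem
  obtain ⟨x, rfl⟩ := (dotProductEquiv K m).surjective g
  refine hgd (hd x (dotProduct_eq_zero _ fun y ↦ ?_))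
  rw [mulVec_transpose, ← dotProduct_mulVec]
  exact hg ⟨y, rfl⟩

theorem mem_range_mulVec_of_sum_eq_zero {ι : Type*} [Fintype ι] {A : Matrix ι ι K} (hA : A.IsSymm)
    (hker : ∀ x, A *ᵥ x = 0 → ∃ c : K, x = fun _ ↦ c) {d : ι → K} (hd : ∑ i, d i = 0) :
    d ∈ Set.range A.mulVec := by
  refine mem_range_mulVec_of_forall_dotProduct_eq_zero fun x hx ↦ ?_
  obtain ⟨c, rfl⟩ := hker x (hA.eq ▸ hx)
  rw [dotProduct, ← Finset.mul_sum, hd, mul_zero]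

end Range

section Contraction

variable {ι κ K : Type*} [Fintype ι] [Fintype κ] [Field K] {A G : Matrix ι ι K}
  {P : Matrix κ ι K} {b : ι → K}

theorem exists_transpose_mulVec_eq_and_mulVec_eq (hPb : P *ᵥ b = 0)
    (hP : ∀ x, b ⬝ᵥ x = 0 → x ∈ Set.range Pᵀ.mulVec) (hG : A * G * A = A)
    (hb : b ∈ Set.range A.mulVec) (hbG : b ⬝ᵥ G *ᵥ b ≠ 0) {d : ι → K}
    (hd : d ∈ Set.range A.mulVec) :
    ∃ y, Pᵀ *ᵥ y = G *ᵥ d - ((b ⬝ᵥ G *ᵥ d) / (b ⬝ᵥ G *ᵥ b)) • G *ᵥ b ∧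
      (P * A * Pᵀ) *ᵥ y = P *ᵥ d := by
  set α := (b ⬝ᵥ G *ᵥ d) / (b ⬝ᵥ G *ᵥ b) with hα
  have horth : b ⬝ᵥ (G *ᵥ d - α • G *ᵥ b) = 0 := by
    rw [dotProduct_sub, dotProduct_smul, smul_eq_mul, hα, div_mul_cancel₀ _ hbG, sub_self]
  obtain ⟨y, hy⟩ := hP _ horth
  refine ⟨y, hy, ?_⟩
  calc (P * A * Pᵀ) *ᵥ y = P *ᵥ (A *ᵥ (Pᵀ *ᵥ y)) := by simp only [mulVec_mulVec, Matrix.mul_assoc]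
    _ = P *ᵥ (d - α • b) := by
      rw [hy, mulVec_sub, mulVec_smul, mulVec_mulVec_of_mem_range hG hd,
        mulVec_mulVec_of_mem_range hG hb]
    _ = P *ᵥ d := by rw [mulVec_sub, mulVec_smul, hPb, smul_zero, sub_zero]

theorem mulVec_dotProduct_mulVec_contraction (hA : A.IsSymm) (hG : A * G * A = A)
    (hb : b ∈ Set.range A.mulVec) (hbG : b ⬝ᵥ G *ᵥ b ≠ 0) (hPb : P *ᵥ b = 0)
    (hP : ∀ x, b ⬝ᵥ x = 0 → x ∈ Set.range Pᵀ.mulVec) {Gc : Matrix κ κ K}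
    (hGc : P * A * Pᵀ * Gc * (P * A * Pᵀ) = P * A * Pᵀ) {d₁ d₂ : ι → K}
    (hd₁ : d₁ ∈ Set.range A.mulVec) (hd₂ : d₂ ∈ Set.range A.mulVec) :
    P *ᵥ d₁ ⬝ᵥ Gc *ᵥ (P *ᵥ d₂) =
      d₁ ⬝ᵥ G *ᵥ d₂ - (d₁ ⬝ᵥ G *ᵥ b) * (b ⬝ᵥ G *ᵥ d₂) / (b ⬝ᵥ G *ᵥ b) := by
  have hAc : (P * A * Pᵀ).IsSymm := by
    simp only [IsSymm, transpose_mul, transpose_transpose, hA.eq, Matrix.mul_assoc]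
  obtain ⟨y₁, -, hy₁⟩ := exists_transpose_mulVec_eq_and_mulVec_eq hPb hP hG hb hbG hd₁
  obtain ⟨y₂, hPy₂, hy₂⟩ := exists_transpose_mulVec_eq_and_mulVec_eq hPb hP hG hb hbG hd₂
  calc P *ᵥ d₁ ⬝ᵥ Gc *ᵥ (P *ᵥ d₂) = P *ᵥ d₁ ⬝ᵥ y₂ := by
        rw [← hy₁, ← hy₂, mulVec_dotProduct_mulVec_mulVec hAc hGc]
    _ = d₁ ⬝ᵥ Pᵀ *ᵥ y₂ := by rw [dotProduct_transpose_mulVec, dotProduct_comm]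
    _ = d₁ ⬝ᵥ G *ᵥ d₂ - (d₁ ⬝ᵥ G *ᵥ b) * (b ⬝ᵥ G *ᵥ d₂) / (b ⬝ᵥ G *ᵥ b) := by
      rw [hPy₂, dotProduct_sub, dotProduct_smul, smul_eq_mul]
      ring

end Contraction

/-- The `0`–`1` matrix of a vertex map `φ : V → V'`: it pushes demand vectors forward along `φ`,
summing over fibres, and its transpose pulls potentials back. -/
def identificationMatrix {V V' : Type*} [DecidableEq V'] (R : Type*) [Zero R] [One R]
    (φ : V → V') : Matrix V' V R :=
  Matrix.of fun z y ↦ if z = φ y then 1 else 0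

section IdentificationMatrix

variable {V V' R : Type*} [DecidableEq V'] [NonAssocSemiring R] {φ : V → V'}

theorem identificationMatrix_mulVec_single_one [Fintype V] [DecidableEq V] (a : V) :
    identificationMatrix R φ *ᵥ Pi.single a 1 = Pi.single (φ a) 1 := by
  ext z
  simp [identificationMatrix, Pi.single_apply]

theorem transpose_identificationMatrix_mulVec [Fintype V'] (y : V' → R) :
    (identificationMatrix R φ)ᵀ *ᵥ y = y ∘ φ := by
  ext a
  simp [identificationMatrix, mulVec, dotProduct]

theorem mem_range_transpose_identificationMatrix_mulVec_iff [Fintype V'] {x : V → R} :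
    x ∈ Set.range (identificationMatrix R φ)ᵀ.mulVec ↔ x.FactorsThrough φ := by
  simp only [Function.factorsThrough_iff, Set.mem_range, transpose_identificationMatrix_mulVec,
    eq_comm]

end IdentificationMatrix

theorem stmt_8_general {V V' : Type*} [Fintype V] [DecidableEq V] [Fintype V'] [DecidableEq V']
    {L G : Matrix V V ℝ} (hL : L.PosSemidef) (hG : L * G * L = L)
    {u v : V} (huv : u ≠ v) {b : V → ℝ} (hb : b = Pi.single u 1 - Pi.single v 1)
    (hbL : b ∈ Set.range L.mulVec)
    {φ : V → V'} (hφuv : φ u = φ v)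
    (hφinj : ∀ x y, φ x = φ y → x = y ∨ (x = u ∧ y = v) ∨ (x = v ∧ y = u))
    {P : Matrix V' V ℝ} (hP : P = identificationMatrix ℝ φ)
    {Lc Gc : Matrix V' V' ℝ} (hLc : Lc = P * L * Pᵀ) (hGc : Lc * Gc * Lc = Lc)
    {d₁ d₂ : V → ℝ} (hd₁ : d₁ ∈ Set.range L.mulVec) (hd₂ : d₂ ∈ Set.range L.mulVec) :
    P *ᵥ d₁ ⬝ᵥ Gc *ᵥ (P *ᵥ d₂) =
      d₁ ⬝ᵥ G *ᵥ d₂ - (d₁ ⬝ᵥ G *ᵥ b) * (b ⬝ᵥ G *ᵥ d₂) / (b ⬝ᵥ G *ᵥ b) := by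
  have hb0 : b ≠ 0 := fun h ↦ by simpa [hb, huv] using congrFun h u
  have hPb : P *ᵥ b = 0 := by
    rw [hP, hb, mulVec_sub, identificationMatrix_mulVec_single_one,
      identificationMatrix_mulVec_single_one, hφuv, sub_self]
  have hPrange (x : V → ℝ) (hx : b ⬝ᵥ x = 0) : x ∈ Set.range Pᵀ.mulVec := by
    have hxuv : x u = x v := by simpa [hb, sub_dotProduct, sub_eq_zero] using hx
    rw [hP, mem_range_transpose_identificationMatrix_mulVec_iff]
    intro y z hyz
    rcases hφinj y z hyz with rfl | ⟨rfl, rfl⟩ | ⟨rfl, rfl⟩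
    exacts [rfl, hxuv, hxuv.symm]
  subst hLc
  exact mulVec_dotProduct_mulVec_contraction hL.isHermitian hG hbL
    (dotProduct_mulVec_ne_zero_of_mem_range hL hG hbL hb0) hPb hPrange hGc hd₁ hd₂

theorem stmt_8
    {V : Type*} {E : Type*} {V' : Type*}
    [Fintype V] [DecidableEq V] [Fintype E] [DecidableEq E] [Fintype V'] [DecidableEq V']
    [Nonempty E]
    (w : E → ℝ) (hw : ∀ e, 0 < w e)
    (B : Matrix E V ℝ)
    (hB : ∀ e : E, ∃ u v : V, u ≠ v ∧
      B e = fun x => (if x = u then (1 : ℝ) else 0) - (if x = v then 1 else 0))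
    (L : Matrix V V ℝ) (hL : L = Bᵀ * Matrix.diagonal w * B)
    (hconn : ∀ x : V → ℝ, L.mulVec x = 0 ↔ ∃ c : ℝ, x = fun _ => c)
    (Lplus : Matrix V V ℝ) (hLplus : IsMoorePenrose L Lplus)
    (f : E) (u v : V) (huv : u ≠ v)
    (hBf : B f = fun x => (if x = u then (1 : ℝ) else 0) - (if x = v then 1 else 0))
    (φ : V → V') (hsurj : Function.Surjective φ) (hφuv : φ u = φ v)
    (hφinj : ∀ a b : V, φ a = φ b → a = b ∨ (a = u ∧ b = v) ∨ (a = v ∧ b = u))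
    (P : Matrix V' V ℝ)
    (hP : P = Matrix.of fun (z : V') (y : V) => if z = φ y then (1 : ℝ) else 0)
    (Lc : Matrix V' V' ℝ) (hLc : Lc = P * L * Pᵀ)
    (Lcplus : Matrix V' V' ℝ) (hLcplus : IsMoorePenrose Lc Lcplus) :
    ∀ d₁ d₂ : V → ℝ, (∑ a, d₁ a) = 0 → (∑ a, d₂ a) = 0 →
      P.mulVec d₁ ⬝ᵥ Lcplus.mulVec (P.mulVec d₂) =
        d₁ ⬝ᵥ Lplus.mulVec d₂ -
          (d₁ ⬝ᵥ Lplus.mulVec (B f)) * (B f ⬝ᵥ Lplus.mulVec d₂) /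
            (B f ⬝ᵥ Lplus.mulVec (B f)) := by
  have hLpsd : L.PosSemidef := by
    simpa only [hL, conjTranspose_eq_transpose_of_trivial] using
      (PosSemidef.diagonal fun e ↦ (hw e).le).conjTranspose_mul_mul_same B
  have mem_range {d : V → ℝ} (hd : ∑ a, d a = 0) : d ∈ Set.range L.mulVec :=
    mem_range_mulVec_of_sum_eq_zero hLpsd.isHermitian (fun x ↦ (hconn x).1) hd
  have hb : B f = Pi.single u 1 - Pi.single v 1 := by ext x; simp [hBf, Pi.single_apply]
  intro d₁ d₂ hd₁ hd₂
  exact stmt_8_general hLpsd hLplus.1 huv hb (mem_range (by simp [hb])) hφuv hφinj hP hLc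
    hLcplus.1 (mem_range hd₁) (mem_range hd₂)
end

section
/- Let S ⊆ V with k := |S| ≥ 2, fix s₀ ∈ S, and let C ∈ ℝ^{V×(k−1)} be the matrix whose columns are the vectors e_{s₀} − e_s for s ∈ S∖{s₀} (the signed indicator vectors of the edges of a star on S centered at s₀). Then the (k−1)×(k−1) matrix N := Cᵀ L_G⁺ C is symmetric positive definite, and for every vector b ∈ ℝ^V with bᵀ1 = 0, the supremum over all nonzero x ∈ ℝ^V supported on S with xᵀ1 = 0 of (xᵀ L_G⁺ b)² / (xᵀ L_G⁺ x) equals bᵀ L_G⁺ C N⁻¹ Cᵀ L_G⁺ b. (Moreover xᵀ L_G⁺ x > 0 for every such x, so the quotient is well defined.) -/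
open Matrix BigOperators

/-!
On nonzero sum-zero vectors `x` the form `xᵀ L⁺ x` is positive, because `L⁺` is positive
semidefinite with the same kernel as `L`, the constant vectors. The columns of `C` form a basis of
the space `W` of sum-zero vectors supported on `S`, so `N` is the Gram matrix of `L⁺` on `W`, and
`u = C N⁻¹ Cᵀ L⁺ b` is the `L⁺`-orthogonal projection of `b` onto `W`. Hence `xᵀ L⁺ b = xᵀ L⁺ u` for
`x ∈ W`, and by Cauchy–Schwarz the quotient is at most `uᵀ L⁺ u`, with equality at `x = u`.
-/

section PosSemidef

variable {V ι : Type*} [Fintype ι]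

lemma posSemidef_transpose_mul_diagonal_mul [Finite V] [DecidableEq ι] {w : ι → ℝ}
    (hw : ∀ i, 0 ≤ w i) (B : Matrix ι V ℝ) : (Bᵀ * diagonal w * B).PosSemidef := by
  simpa using (PosSemidef.diagonal hw).conjTranspose_mul_mul_same B

variable [Fintype V]

lemma posDef_transpose_mul_mul {P : Matrix V V ℝ} {C : Matrix V ι ℝ} (hP : P.IsSymm)
    (hpos : ∀ y, y ≠ 0 → 0 < C *ᵥ y ⬝ᵥ P *ᵥ C *ᵥ y) : (Cᵀ * P * C).PosDef := by
  refine .of_dotProduct_mulVec_pos ?_ fun y hy => ?_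
  · simp [IsHermitian, Matrix.mul_assoc, hP.eq]
  · simpa [← mulVec_mulVec, dotProduct_transpose_mulVec, dotProduct_comm] using hpos y hy

variable {P : Matrix V V ℝ}

lemma sq_dotProduct_mulVec_le (hP : P.PosSemidef) (x y : V → ℝ) :
    (x ⬝ᵥ P *ᵥ y) ^ 2 ≤ (x ⬝ᵥ P *ᵥ x) * (y ⬝ᵥ P *ᵥ y) := by
  classical
  have symm : LinearMap.IsSymm (toBilin' P) :=
    LinearMap.BilinForm.isSymm_iff.1 (isSymm_toBilin'_iff_isSymm.2 hP.isHermitian)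
  simpa only [toBilin'_apply'] using
    LinearMap.BilinForm.apply_sq_le_of_symm (toBilin' P)
      (fun z => by simpa [toBilin'_apply'] using hP.dotProduct_mulVec_nonneg z)
      symm x y

lemma isGreatest_sq_dotProduct_mulVec_div (hP : P.PosSemidef) {W : Submodule ℝ (V → ℝ)}
    (hW : W ≠ ⊥) {b u : V → ℝ} (hu : u ∈ W) (hbu : ∀ x ∈ W, x ⬝ᵥ P *ᵥ b = x ⬝ᵥ P *ᵥ u) :
    IsGreatest {t | ∃ x ∈ W, x ≠ 0 ∧ t = (x ⬝ᵥ P *ᵥ b) ^ 2 / (x ⬝ᵥ P *ᵥ x)} (u ⬝ᵥ P *ᵥ u) := by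
  have nonneg (x : V → ℝ) : 0 ≤ x ⬝ᵥ P *ᵥ x := by simpa using hP.dotProduct_mulVec_nonneg x
  constructor
  · by_cases hu0 : u = 0
    · obtain ⟨x, hxW, hx⟩ := W.exists_mem_ne_zero_of_ne_bot hW
      exact ⟨x, hxW, hx, by simp [hbu x hxW, hu0]⟩
    · exact ⟨u, hu, hu0, by rw [hbu u hu, sq, mul_self_div_self]⟩
  · rintro t ⟨x, hxW, -, rfl⟩
    rw [hbu x hxW]
    -- A vanishing denominator makes the quotient `0`, which is still below the bound.
    refine div_le_of_le_mul₀ (nonneg x) (nonneg u) ?_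
    exact (sq_dotProduct_mulVec_le hP x u).trans_eq (mul_comm _ _)

lemma isGreatest_sq_dotProduct_mulVec_div_range [DecidableEq ι] (hP : P.PosSemidef)
    {C : Matrix V ι ℝ} (hC : C ≠ 0) (hN : IsUnit (Cᵀ * P * C)) (b : V → ℝ) :
    IsGreatest {t | ∃ x ∈ LinearMap.range C.mulVecLin, x ≠ 0 ∧
        t = (x ⬝ᵥ P *ᵥ b) ^ 2 / (x ⬝ᵥ P *ᵥ x)}
      (b ⬝ᵥ (P * C * (Cᵀ * P * C)⁻¹ * Cᵀ * P) *ᵥ b) := by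
  set N := Cᵀ * P * C
  have hPT : Pᵀ = P := hP.isHermitian
  let u := C *ᵥ N⁻¹ *ᵥ Cᵀ *ᵥ P *ᵥ b
  have hu : u ∈ LinearMap.range C.mulVecLin := ⟨_, rfl⟩
  have normal_equation : Cᵀ *ᵥ P *ᵥ u = Cᵀ *ᵥ P *ᵥ b := by
    have : Cᵀ *ᵥ P *ᵥ u = (N * N⁻¹) *ᵥ Cᵀ *ᵥ P *ᵥ b := by
      simp only [u, N, mulVec_mulVec, Matrix.mul_assoc]
    rw [this, mul_nonsing_inv _ ((isUnit_iff_isUnit_det N).1 hN), one_mulVec]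
  have hbu : ∀ x ∈ LinearMap.range C.mulVecLin, x ⬝ᵥ P *ᵥ b = x ⬝ᵥ P *ᵥ u := by
    rintro _ ⟨y, rfl⟩
    rw [mulVecLin_apply, dotProduct_comm, ← dotProduct_transpose_mulVec, ← normal_equation,
      dotProduct_transpose_mulVec, dotProduct_comm]
  have value : b ⬝ᵥ (P * C * N⁻¹ * Cᵀ * P) *ᵥ b = u ⬝ᵥ P *ᵥ u :=
    calc b ⬝ᵥ (P * C * N⁻¹ * Cᵀ * P) *ᵥ b = b ⬝ᵥ Pᵀ *ᵥ u := by
          simp only [u, hPT, mulVec_mulVec, Matrix.mul_assoc]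
      _ = u ⬝ᵥ P *ᵥ u := by rw [dotProduct_transpose_mulVec, hbu u hu]
  rw [value]
  refine isGreatest_sq_dotProduct_mulVec_div hP ?_ hu hbu
  rw [Ne, LinearMap.range_eq_bot]
  exact fun h => hC (mulVec_injective (funext fun y => by simpa using LinearMap.congr_fun h y))

end PosSemidef

namespace IsMoorePenrose

variable {ι : Type*} [Fintype ι] [DecidableEq ι] {A P Q : Matrix ι ι ℝ}

lemma isSymm (h : IsMoorePenrose A P) (hA : A.IsSymm) : P.IsSymm :=
  unique (hA.eq ▸ h.transpose) h

lemma commute (h : IsMoorePenrose A P) (hA : A.IsSymm) : Commute A P := by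
  have hAP : (A * P)ᵀ = A * P := h.2.2.1
  rw [transpose_mul, (h.isSymm hA).eq, hA.eq] at hAP
  exact hAP.symm

lemma mulVec_eq_zero_of_mulVec_eq_zero (h : IsMoorePenrose A P) (hA : A.IsSymm) {x : ι → ℝ}
    (hx : P *ᵥ x = 0) : A *ᵥ x = 0 := by
  rw [← h.1, Matrix.mul_assoc, ← (h.commute hA).eq, ← mulVec_mulVec, ← mulVec_mulVec, hx,
    mulVec_zero, mulVec_zero]

lemma posSemidef (h : IsMoorePenrose A P) (hA : A.PosSemidef) : P.PosSemidef := by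
  have hPT : Pᵀ = P := h.isSymm hA.isHermitian
  simpa [hPT, h.2.1] using hA.conjTranspose_mul_mul_same P

lemma dotProduct_mulVec_pos (h : IsMoorePenrose A P) (hA : A.PosSemidef) {x : ι → ℝ}
    (hx : A *ᵥ x ≠ 0) : 0 < x ⬝ᵥ P *ᵥ x := by
  have hP := h.posSemidef hA
  have nonneg : 0 ≤ x ⬝ᵥ P *ᵥ x := by simpa using hP.dotProduct_mulVec_nonneg x
  refine nonneg.lt_of_ne' fun h0 => hx ?_
  exact h.mulVec_eq_zero_of_mulVec_eq_zero hA.isHermitian <|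
    (hP.dotProduct_mulVec_zero_iff x).1 (by simpa using h0)

end IsMoorePenrose

/-- The signed incidence matrix of the star on `S` centred at `s₀`: the column indexed by the leaf
`s ∈ S \ {s₀}` is `e_{s₀} - e_s`. For `s₀ ∈ S` its columns are a basis of the sum-zero vectors
supported on `S`. -/
def starIncidence {V : Type*} [DecidableEq V] (R : Type*) [Ring R] (S : Finset V) (s₀ : V) :
    Matrix V {s // s ∈ S.erase s₀} R :=
  of fun x s => (if x = s₀ then 1 else 0) - (if x = s.1 then 1 else 0)

namespace starIncidence

variable {V R : Type*} [DecidableEq V] [Ring R] {S : Finset V} {s₀ : V}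

lemma mulVec_eq_sub (y : {s // s ∈ S.erase s₀} → R) (a : V) :
    (starIncidence R S s₀ *ᵥ y) a =
      (if a = s₀ then ∑ s, y s else 0) - ∑ s, if a = s.1 then y s else 0 := by
  simp [starIncidence, mulVec, dotProduct, sub_mul, Finset.sum_ite_irrel]

lemma mulVec_leaf (y : {s // s ∈ S.erase s₀} → R) (s : {s // s ∈ S.erase s₀}) :
    (starIncidence R S s₀ *ᵥ y) s = -y s := by
  simp [mulVec_eq_sub, Finset.ne_of_mem_erase s.2]

lemma mulVec_of_notMem (hs₀ : s₀ ∈ S) (y : {s // s ∈ S.erase s₀} → R) {a : V} (ha : a ∉ S) :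
    (starIncidence R S s₀ *ᵥ y) a = 0 := by
  have ne_of_mem {s : V} (hs : s ∈ S) : a ≠ s := fun h => ha (h ▸ hs)
  rw [mulVec_eq_sub, if_neg (ne_of_mem hs₀), Finset.sum_eq_zero, sub_zero]
  exact fun s _ => if_neg (ne_of_mem (Finset.mem_of_mem_erase s.2))

lemma mulVec_injective : Function.Injective (starIncidence R S s₀).mulVec := fun y z hyz =>
  funext fun s => neg_injective <| by rw [← mulVec_leaf, hyz, mulVec_leaf]

variable [Fintype V]

lemma sum_mulVec (y : {s // s ∈ S.erase s₀} → R) : ∑ a, (starIncidence R S s₀ *ᵥ y) a = 0 := by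
  simp only [mulVec_eq_sub, Finset.sum_sub_distrib]
  rw [Finset.sum_comm (s := Finset.univ (α := V))]
  simp

lemma mulVec_neg_restrict (hs₀ : s₀ ∈ S) {x : V → R} (hsupp : ∀ a, a ∉ S → x a = 0)
    (hsum : ∑ a, x a = 0) : starIncidence R S s₀ *ᵥ (fun s => -x s) = x := by
  set z := starIncidence R S s₀ *ᵥ (fun s => -x s)
  have off_centre (a : V) (ha : a ≠ s₀) : z a = x a := by
    by_cases haS : a ∈ S
    · simpa using mulVec_leaf (fun s => -x s) ⟨a, Finset.mem_erase.2 ⟨ha, haS⟩⟩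
    · rw [hsupp a haS]
      exact mulVec_of_notMem hs₀ _ haS
  have at_centre : z s₀ = x s₀ := by
    have hsums : ∑ a, (z a - x a) = 0 := by
      rw [Finset.sum_sub_distrib, hsum, sub_zero]
      exact sum_mulVec _
    rw [Fintype.sum_eq_single s₀ fun a ha => sub_eq_zero.2 (off_centre a ha)] at hsums
    exact sub_eq_zero.1 hsums
  exact funext fun a => if ha : a = s₀ then ha ▸ at_centre else off_centre a ha

end starIncidence

lemma mem_range_mulVecLin_starIncidence {V R : Type*} [Fintype V] [DecidableEq V] [CommRing R]
    {S : Finset V} {s₀ : V} (hs₀ : s₀ ∈ S) {x : V → R} :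
    x ∈ LinearMap.range (starIncidence R S s₀).mulVecLin ↔
      (∀ a, a ∉ S → x a = 0) ∧ ∑ a, x a = 0 := by
  constructor
  · rintro ⟨y, rfl⟩
    exact ⟨fun a ha => starIncidence.mulVec_of_notMem hs₀ y ha, starIncidence.sum_mulVec y⟩
  · rintro ⟨hsupp, hsum⟩
    exact ⟨_, starIncidence.mulVec_neg_restrict hs₀ hsupp hsum⟩

lemma starIncidence_ne_zero {V R : Type*} [DecidableEq V] [Ring R] [Nontrivial R] {S : Finset V}
    (hS : S.Nontrivial) (s₀ : V) : starIncidence R S s₀ ≠ 0 := by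
  obtain ⟨s, hs, hne⟩ := hS.exists_ne s₀
  intro h
  simpa [starIncidence, hne] using congrFun₂ h s ⟨s, Finset.mem_erase.2 ⟨hne, hs⟩⟩

lemma eq_zero_of_eq_const_of_sum_eq_zero {V M : Type*} [Fintype V] [AddCommMonoid M]
    [IsAddTorsionFree M] {x : V → M} (hconst : ∃ c, x = fun _ => c) (hsum : ∑ a, x a = 0) :
    x = 0 := by
  obtain ⟨c, rfl⟩ := hconst
  funext a
  have : Nonempty V := ⟨a⟩
  simpa using hsum

theorem stmt_12_general {V : Type*} [Fintype V] [DecidableEq V]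
    {L Lplus : Matrix V V ℝ} (hL : L.PosSemidef)
    (hker : ∀ x : V → ℝ, L *ᵥ x = 0 → ∑ a, x a = 0 → x = 0) (hLplus : IsMoorePenrose L Lplus)
    {S : Finset V} (hS : S.Nontrivial) {s₀ : V} (hs₀ : s₀ ∈ S)
    {C : Matrix V {s // s ∈ S.erase s₀} ℝ} (hC : C = starIncidence ℝ S s₀)
    {N : Matrix {s // s ∈ S.erase s₀} {s // s ∈ S.erase s₀} ℝ} (hN : N = Cᵀ * Lplus * C) :
    N.PosDef ∧
    (∀ x : V → ℝ, x ≠ 0 → ∑ a, x a = 0 → 0 < x ⬝ᵥ Lplus *ᵥ x) ∧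
    ∀ b : V → ℝ,
      IsGreatest {t : ℝ | ∃ x : V → ℝ, x ≠ 0 ∧ (∀ a, a ∉ S → x a = 0) ∧ ∑ a, x a = 0 ∧
          t = (x ⬝ᵥ Lplus *ᵥ b) ^ 2 / (x ⬝ᵥ Lplus *ᵥ x)}
        (b ⬝ᵥ (Lplus * C * N⁻¹ * Cᵀ * Lplus) *ᵥ b) := by
  subst hC hN
  have hpos (x : V → ℝ) (hx : x ≠ 0) (hsum : ∑ a, x a = 0) : 0 < x ⬝ᵥ Lplus *ᵥ x :=
    hLplus.dotProduct_mulVec_pos hL fun h => hx (hker x h hsum)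
  have hN : ((starIncidence ℝ S s₀)ᵀ * Lplus * starIncidence ℝ S s₀).PosDef := by
    refine posDef_transpose_mul_mul (hLplus.isSymm hL.isHermitian) fun y hy => ?_
    refine hpos _ (fun h => hy ?_) (starIncidence.sum_mulVec y)
    exact starIncidence.mulVec_injective (h.trans (mulVec_zero _).symm)
  refine ⟨hN, hpos, fun b => ?_⟩
  convert isGreatest_sq_dotProduct_mulVec_div_range (hLplus.posSemidef hL)
    (starIncidence_ne_zero hS s₀) hN.isUnit b using 5
  rw [mem_range_mulVecLin_starIncidence hs₀]
  tauto

theorem stmt_12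
    {V : Type*} {E : Type*} [Fintype V] [DecidableEq V] [Fintype E] [DecidableEq E]
    [Nonempty E]
    (w : E → ℝ) (hw : ∀ e, 0 < w e)
    (B : Matrix E V ℝ)
    (hB : ∀ e : E, ∃ u v : V, u ≠ v ∧
      B e = fun x => (if x = u then (1 : ℝ) else 0) - (if x = v then 1 else 0))
    (L : Matrix V V ℝ) (hL : L = Bᵀ * Matrix.diagonal w * B)
    (hconn : ∀ x : V → ℝ, L.mulVec x = 0 ↔ ∃ c : ℝ, x = fun _ => c)
    (Lplus : Matrix V V ℝ) (hLplus : IsMoorePenrose L Lplus)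
    (S : Finset V) (k : ℕ) (hk : k = S.card) (hk2 : 2 ≤ k)
    (s₀ : V) (hs₀ : s₀ ∈ S)
    (C : Matrix V {s // s ∈ S.erase s₀} ℝ)
    (hC : C = Matrix.of fun (x : V) (s : {s // s ∈ S.erase s₀}) =>
      (if x = s₀ then (1 : ℝ) else 0) - (if x = s.1 then 1 else 0))
    (N : Matrix {s // s ∈ S.erase s₀} {s // s ∈ S.erase s₀} ℝ)
    (hN : N = Cᵀ * Lplus * C) :
    N.PosDef ∧
    (∀ x : V → ℝ, x ≠ 0 → (∀ a, a ∉ S → x a = 0) → (∑ a, x a) = 0 →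
      0 < x ⬝ᵥ Lplus.mulVec x) ∧
    ∀ b : V → ℝ, (∑ a, b a) = 0 →
      sSup {t : ℝ | ∃ x : V → ℝ, x ≠ 0 ∧ (∀ a, a ∉ S → x a = 0) ∧ (∑ a, x a) = 0 ∧
          t = (x ⬝ᵥ Lplus.mulVec b) ^ 2 / (x ⬝ᵥ Lplus.mulVec x)} =
        b ⬝ᵥ (Lplus * C * N⁻¹ * Cᵀ * Lplus).mulVec b := by
  obtain ⟨hpd, hpos, hmax⟩ := stmt_12_general
    (hL ▸ posSemidef_transpose_mul_diagonal_mul (fun e => (hw e).le) B)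
    (fun x hx => eq_zero_of_eq_const_of_sum_eq_zero ((hconn x).1 hx))
    hLplus (Finset.one_lt_card_iff_nontrivial.1 (hk ▸ hk2)) hs₀ hC hN
  exact ⟨hpd, fun x hx _ => hpos x hx, fun b _ => (hmax b).csSup_eq⟩
end

section
/- Let E be a finite set with |E| = m ≥ 1, let M : E × E → ℝ be symmetric (M(e,f) = M(f,e)) with all values nonnegative, and suppose Σ_{e∈E} Σ_{f∈E} M(e,f) ≤ K·m for some K > 0. Then for every γ ∈ (0,1) there exists a subset W ⊆ E with: (i) |W| ≥ (γ/4)·m, and (ii) for every e ∈ W, Σ_{f∈W, f≠e} M(e,f) ≤ 100·K·γ. -/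
open BigOperators

/-!
Color `E` with `q = ⌈γ⁻¹⌉₊` colors so that the total weight of the monochromatic ordered pairs is
minimal. Recoloring a single point cannot decrease that weight, so every point has at most a `1 / q`
fraction of its incident weight (counted in both directions) inside its own color class. By Markov's
inequality at least half of the points have incident weight at most `4 * K`, twice the average
bound, and some color class contains at least a `1 / q` fraction of these points; they form `W`.
-/

section Coloring

variable {E ι R : Type*} [DecidableEq E] [DecidableEq ι]

/-- The weight, counted in both directions, between a point `e` and the points of `A` other than
`e`. -/
def incidentWeight [AddCommMonoid R] (M : E → E → R) (e : E) (A : Finset E) : R :=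
  ∑ f ∈ A.erase e, (M e f + M f e)

/-- The total weight of the ordered pairs of distinct points to which the coloring `c` gives the
same color; this is the potential whose minimizers are the colorings we want. -/
def monochromaticWeight [Fintype E] [AddCommMonoid R] (M : E → E → R) (c : E → ι) : R :=
  ∑ e, ∑ f ∈ Finset.univ.erase e, if c f = c e then M e f else 0

theorem incidentWeight_nonneg [AddCommMonoid R] [PartialOrder R] [IsOrderedAddMonoid R]
    {M : E → E → R} (hM : ∀ e f, 0 ≤ M e f) (e : E) (A : Finset E) :
    0 ≤ incidentWeight M e A :=
  Finset.sum_nonneg fun f _ => add_nonneg (hM e f) (hM f e)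

theorem incidentWeight_mono [AddCommMonoid R] [PartialOrder R] [IsOrderedAddMonoid R]
    {M : E → E → R} (hM : ∀ e f, 0 ≤ M e f) (e : E) {A B : Finset E} (hAB : A ⊆ B) :
    incidentWeight M e A ≤ incidentWeight M e B :=
  Finset.sum_le_sum_of_subset_of_nonneg (Finset.erase_subset_erase e hAB)
    fun f _ _ => add_nonneg (hM e f) (hM f e)

theorem sum_sum_erase_eq_incidentWeight_add [AddCommMonoid R] (M : E → E → R) {S : Finset E}
    {e : E} (he : e ∈ S) :
    ∑ g ∈ S, ∑ f ∈ S.erase g, M g f =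
      incidentWeight M e S + ∑ g ∈ S.erase e, ∑ f ∈ (S.erase e).erase g, M g f := by
  have split_row : ∀ g ∈ S.erase e,
      ∑ f ∈ S.erase g, M g f = M g e + ∑ f ∈ (S.erase e).erase g, M g f := fun g hg => by
    rw [Finset.erase_right_comm, Finset.add_sum_erase]
    exact Finset.mem_erase.2 ⟨(Finset.ne_of_mem_erase hg).symm, he⟩
  rw [← Finset.add_sum_erase S _ he, Finset.sum_congr rfl split_row, Finset.sum_add_distrib,
    incidentWeight, Finset.sum_add_distrib, add_assoc]

variable [Fintype E]

theorem monochromaticWeight_eq_incidentWeight_add [AddCommMonoid R] (M : E → E → R) (c : E → ι)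
    (e : E) :
    monochromaticWeight M c = incidentWeight M e {f | c f = c e} +
      ∑ g ∈ Finset.univ.erase e, ∑ f ∈ (Finset.univ.erase e).erase g,
        if c f = c g then M g f else 0 := by
  rw [monochromaticWeight, sum_sum_erase_eq_incidentWeight_add _ (Finset.mem_univ e)]
  congr 1
  rw [incidentWeight, incidentWeight, ← Finset.filter_erase, Finset.sum_filter]
  refine Finset.sum_congr rfl fun f _ => ?_
  by_cases hf : c f = c e
  · simp [hf]
  · simp [hf, Ne.symm hf]

theorem monochromaticWeight_update [AddCommMonoid R] (M : E → E → R) (c : E → ι) (e : E) (i : ι) :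
    monochromaticWeight M (Function.update c e i) + incidentWeight M e {f | c f = c e} =
      monochromaticWeight M c + incidentWeight M e {f | c f = i} := by
  have new_class : incidentWeight M e {f | Function.update c e i f = Function.update c e i e} =
      incidentWeight M e {f | c f = i} := by
    refine Finset.sum_congr ?_ fun _ _ => rfl
    ext f
    by_cases hf : f = e <;> simp [hf]
  have other_pairs : ∀ g ∈ Finset.univ.erase e, ∀ f ∈ (Finset.univ.erase e).erase g,
      (if Function.update c e i f = Function.update c e i g then M g f else 0) =
        if c f = c g then M g f else 0 := fun g hg f hf => by
    rw [Function.update_of_ne (Finset.ne_of_mem_erase hg),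
      Function.update_of_ne (Finset.ne_of_mem_erase (Finset.mem_of_mem_erase hf))]
  rw [monochromaticWeight_eq_incidentWeight_add M (Function.update c e i) e, new_class,
    Finset.sum_congr rfl fun g hg => Finset.sum_congr rfl (other_pairs g hg),
    monochromaticWeight_eq_incidentWeight_add M c e]
  abel

theorem exists_coloring_incidentWeight_le [Finite ι] [Nonempty ι] [AddCommMonoid R] [LinearOrder R]
    [IsOrderedCancelAddMonoid R] (M : E → E → R) :
    ∃ c : E → ι, ∀ e i, incidentWeight M e {f | c f = c e} ≤ incidentWeight M e {f | c f = i} := by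
  obtain ⟨c, hmin⟩ := Finite.exists_min fun c : E → ι => monochromaticWeight M c
  refine ⟨c, fun e i => ?_⟩
  rw [← add_le_add_iff_left (monochromaticWeight M c), ← monochromaticWeight_update M c e i]
  gcongr
  exact hmin _

theorem sum_incidentWeight_fiber [Fintype ι] [AddCommMonoid R] (M : E → E → R) (c : E → ι)
    (e : E) : ∑ i, incidentWeight M e {f | c f = i} = incidentWeight M e Finset.univ := by
  simp only [incidentWeight, ← Finset.filter_erase]
  exact Finset.sum_fiberwise _ _ _

theorem exists_coloring_card_nsmul_incidentWeight_le [Fintype ι] [Nonempty ι] [AddCommMonoid R]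
    [LinearOrder R] [IsOrderedCancelAddMonoid R] (M : E → E → R) :
    ∃ c : E → ι, ∀ e,
      Fintype.card ι • incidentWeight M e {f | c f = c e} ≤ incidentWeight M e Finset.univ := by
  obtain ⟨c, hc⟩ := exists_coloring_incidentWeight_le (ι := ι) M
  refine ⟨c, fun e => ?_⟩
  rw [← sum_incidentWeight_fiber M c e]
  exact Finset.card_nsmul_le_sum _ _ _ fun i _ => hc e i

theorem sum_incidentWeight_univ_le [AddCommMonoid R] [PartialOrder R] [IsOrderedAddMonoid R]
    {M : E → E → R} (hM : ∀ e f, 0 ≤ M e f) :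
    ∑ e, incidentWeight M e Finset.univ ≤ 2 • ∑ e, ∑ f, M e f :=
  calc ∑ e, incidentWeight M e Finset.univ
      ≤ ∑ e, ∑ f, (M e f + M f e) := Finset.sum_le_sum fun e _ =>
        Finset.sum_le_sum_of_subset_of_nonneg (Finset.erase_subset _ _)
          fun f _ _ => add_nonneg (hM e f) (hM f e)
    _ = 2 • ∑ e, ∑ f, M e f := by
        simp only [Finset.sum_add_distrib]
        rw [Finset.sum_comm (f := fun e f => M f e), two_nsmul]

end Coloring

theorem exists_card_le_card_mul_card_fiber {α ι : Type*} [Fintype ι] [Nonempty ι] [DecidableEq ι]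
    (c : α → ι) (s : Finset α) :
    ∃ i, s.card ≤ Fintype.card ι * (s.filter fun a => c a = i).card := by
  obtain ⟨i, hmax⟩ := Finite.exists_max fun i => (s.filter fun a => c a = i).card
  refine ⟨i, ?_⟩
  rw [mul_comm]
  exact Finset.card_le_mul_card_image_of_maps_to (fun a _ => Finset.mem_univ (c a)) _
    fun j _ => hmax j

section OrderedRing

variable {α E R : Type*} [CommRing R] [LinearOrder R] [IsStrictOrderedRing R]

theorem card_le_two_mul_card_filter_le_two_mul {s : Finset α} {w : α → R} {B : R}
    (hw : ∀ a ∈ s, 0 ≤ w a) (hB : 0 < B) (hsum : ∑ a ∈ s, w a ≤ B * s.card) :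
    s.card ≤ 2 * (s.filter fun a => w a ≤ 2 * B).card := by
  set heavy := s.filter fun a => ¬ w a ≤ 2 * B
  have markov : B * (2 * heavy.card) ≤ B * s.card :=
    calc B * (2 * heavy.card) = heavy.card • (2 * B) := by rw [nsmul_eq_mul]; ring
      _ ≤ ∑ a ∈ heavy, w a := Finset.card_nsmul_le_sum _ _ _ fun a ha =>
          (not_le.1 (Finset.mem_filter.1 ha).2).le
      _ ≤ ∑ a ∈ s, w a := Finset.sum_le_sum_of_subset_of_nonneg (Finset.filter_subset _ _)
          fun a ha _ => hw a ha
      _ ≤ B * s.card := hsum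
  have heavy_card : 2 * heavy.card ≤ s.card := by
    exact_mod_cast le_of_mul_le_mul_left markov hB
  have light_add_heavy : (s.filter fun a => w a ≤ 2 * B).card + heavy.card = s.card :=
    Finset.card_filter_add_card_filter_not _
  lia

theorem exists_finset_card_mul_incidentWeight_le [Fintype E] [DecidableEq E] {M : E → E → R}
    (hM : ∀ e f, 0 ≤ M e f) {K : R} (hK : 0 < K) (hsum : ∑ e, ∑ f, M e f ≤ K * Fintype.card E)
    {q : ℕ} (hq : 0 < q) :
    ∃ W : Finset E, Fintype.card E ≤ 2 * (q * W.card) ∧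
      ∀ e ∈ W, q * incidentWeight M e W ≤ 4 * K := by
  have : Nonempty (Fin q) := ⟨⟨0, hq⟩⟩
  obtain ⟨c, hc⟩ := exists_coloring_card_nsmul_incidentWeight_le (ι := Fin q) M
  simp only [Fintype.card_fin, nsmul_eq_mul] at hc
  set light := Finset.univ.filter fun e => incidentWeight M e Finset.univ ≤ 2 * (2 * K)
  have half_light : Fintype.card E ≤ 2 * light.card := by
    refine card_le_two_mul_card_filter_le_two_mul (s := Finset.univ)
      (fun e _ => incidentWeight_nonneg hM e _) (by positivity) ?_
    calc ∑ e, incidentWeight M e Finset.univ ≤ 2 • ∑ e, ∑ f, M e f :=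
          sum_incidentWeight_univ_le hM
      _ ≤ 2 • (K * Fintype.card E) := by gcongr
      _ = 2 * K * (Finset.univ : Finset E).card := by
          rw [Finset.card_univ, nsmul_eq_mul, Nat.cast_ofNat, mul_assoc]
  obtain ⟨i, hi⟩ := exists_card_le_card_mul_card_fiber c light
  rw [Fintype.card_fin] at hi
  refine ⟨light.filter fun e => c e = i, by lia, fun e he => ?_⟩
  obtain ⟨he_light, rfl⟩ := Finset.mem_filter.1 he
  calc q * incidentWeight M e (light.filter fun f => c f = c e)
      ≤ q * incidentWeight M e {f | c f = c e} := by
        gcongr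
        exact incidentWeight_mono hM e (Finset.filter_subset_filter _ (Finset.subset_univ _))
    _ ≤ incidentWeight M e Finset.univ := hc e
    _ ≤ 2 * (2 * K) := (Finset.mem_filter.1 he_light).2
    _ = 4 * K := by ring

end OrderedRing

theorem stmt_14_general {E R : Type*} [Fintype E] [DecidableEq E]
    [Field R] [LinearOrder R] [IsStrictOrderedRing R] [FloorSemiring R]
    (M : E → E → R) (hnonneg : ∀ e f, 0 ≤ M e f)
    (K : R) (hK : 0 < K) (hsum : (∑ e, ∑ f, M e f) ≤ K * Fintype.card E)
    (γ : R) (hγ0 : 0 < γ) (hγ1 : γ ≤ 1) :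
    ∃ W : Finset E, γ / 4 * Fintype.card E ≤ W.card ∧
      ∀ e ∈ W, (∑ f ∈ W.erase e, (M e f + M f e)) ≤ 4 * K * γ := by
  set q := ⌈γ⁻¹⌉₊
  have one_le : 1 ≤ γ * q := (inv_le_iff_one_le_mul₀' hγ0).1 (Nat.le_ceil _)
  have le_two : γ * q ≤ 2 := by
    have := mul_le_mul_of_nonneg_left (Nat.ceil_lt_add_one (inv_nonneg.2 hγ0.le)).le hγ0.le
    rw [mul_add, mul_inv_cancel₀ hγ0.ne'] at this
    linarith
  obtain ⟨W, card_le, weight_le⟩ := exists_finset_card_mul_incidentWeight_le hnonneg hK hsum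
    (Nat.ceil_pos.2 (inv_pos.2 hγ0))
  refine ⟨W, ?_, fun e he => ?_⟩
  · have card_le' : (Fintype.card E : R) ≤ 2 * (q * W.card) := by exact_mod_cast card_le
    calc γ / 4 * Fintype.card E ≤ γ / 4 * (2 * (q * W.card)) := by gcongr
      _ = γ * q * W.card / 2 := by ring
      _ ≤ 2 * W.card / 2 := by gcongr
      _ = W.card := by ring
  · calc incidentWeight M e W
      _ ≤ γ * q * incidentWeight M e W := le_mul_of_one_le_left
          (incidentWeight_nonneg hnonneg e W) one_le
      _ = q * incidentWeight M e W * γ := by ring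
      _ ≤ 4 * K * γ := mul_le_mul_of_nonneg_right (weight_le e he) hγ0.le

theorem stmt_14 {E : Type*} [Fintype E] [DecidableEq E]
    (m : ℕ) (hm : m = Fintype.card E) (hm1 : 1 ≤ m)
    (M : E → E → ℝ) (hsymm : ∀ e f, M e f = M f e) (hnonneg : ∀ e f, 0 ≤ M e f)
    (K : ℝ) (hK : 0 < K) (hsum : (∑ e, ∑ f, M e f) ≤ K * m)
    (γ : ℝ) (hγ0 : 0 < γ) (hγ1 : γ < 1) :
    ∃ W : Finset E, γ / 4 * m ≤ W.card ∧
      ∀ e ∈ W, (∑ f ∈ W.erase e, M e f) ≤ 100 * K * γ := by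
  subst hm
  obtain ⟨W, card_le, weight_le⟩ := stmt_14_general M hnonneg K hK hsum γ hγ0 hγ1.le
  refine ⟨W, card_le, fun e he => ?_⟩
  calc ∑ f ∈ W.erase e, M e f
      ≤ ∑ f ∈ W.erase e, (M e f + M f e) := by
        gcongr with f
        exact le_add_of_nonneg_right (hnonneg f e)
    _ ≤ 4 * K * γ := weight_le e he
    _ ≤ 100 * K * γ := by gcongr; norm_num
end
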